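/- arXiv:2406.09518 — 7 statements merged into one kernel-verified Lean document; each statement's English description precedes it below -/
import Mathlib

section
/- Let n ≥ 2 be an integer. Suppose P(x,y), Q(x), R(y) are polynomials with nonnegative integer coefficients, where P has degree at most n−2 in x and at most n−2 in y, Q and R have degree at most n−1, P is not the zero polynomial, and the polynomial identity P(x,y)·(1 + x + y) = Q(x)·(1 + y + y² + ⋯ + y^{n−1}) + R(y)·(1 + x + x² + ⋯ + x^{n−1}) holds. Then n is divisible by 3. -/
open MvPolynomial

/-! Working modulo `1 + x + y` means substituting `y = -1 - x`. With `S(x) = 1 + x + ⋯ + x^(n-1)`,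
the identity becomes `Q(x) S(-1-x) + R(-1-x) S(x) = 0`. A common complex root `z` of `S(x)` and
`S(-1-x)` would make `z` and `-1 - z` roots of unity, hence on the unit circle, which forces
`z² + z + 1 = 0`; then `z` has order exactly `3`, and `z^n = 1` gives `3 ∣ n`. If `3 ∤ n`, the two
polynomials are therefore coprime over `ℚ`, hence over any field of characteristic zero, so `S ∣ Q`,
and comparing degrees `Q = c S`. Then `R = -c S`, the right-hand side of the identity cancels, and
`P = 0`. -/

section UnitCircle

open scoped ComplexConjugate

lemma sq_add_self_add_one_eq_zero_of_norm_eq_one {z : ℂ} (hz : ‖z‖ = 1) (hw : ‖-1 - z‖ = 1) :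
    z ^ 2 + z + 1 = 0 := by
  have hz' : z * conj z = 1 := by simp [Complex.mul_conj', hz]
  have hw' : (-1 - z) * conj (-1 - z) = 1 := by rw [Complex.mul_conj', hw]; norm_num
  simp only [map_sub, map_neg, map_one] at hw'
  linear_combination z * hw' - (z + 1) * hz'

lemma isPrimitiveRoot_three_of_norm_eq_one {z : ℂ} (hz : ‖z‖ = 1) (hw : ‖-1 - z‖ = 1) :
    IsPrimitiveRoot z 3 := by
  rw [← Polynomial.isRoot_cyclotomic_iff, Polynomial.cyclotomic_three]
  simpa using sq_add_self_add_one_eq_zero_of_norm_eq_one hz hw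

lemma three_dvd_of_pow_eq_one {n : ℕ} {z : ℂ} (hz : z ^ n = 1) (hw : (-1 - z) ^ n = 1) :
    3 ∣ n := by
  rcases eq_or_ne n 0 with rfl | hn
  · exact dvd_zero 3
  · have hprim : IsPrimitiveRoot z 3 := isPrimitiveRoot_three_of_norm_eq_one
      (Complex.norm_eq_one_of_pow_eq_one hz hn) (Complex.norm_eq_one_of_pow_eq_one hw hn)
    exact hprim.dvd_of_pow_eq_one n hz

end UnitCircle

/-- The polynomial `1 + X + ⋯ + X ^ (n - 1)`, equal to `0` for `n = 0`. -/
noncomputable def geomSumX (A : Type*) [Semiring A] (n : ℕ) : Polynomial A :=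
  ∑ i ∈ Finset.range n, Polynomial.X ^ i

lemma map_geomSumX {A B : Type*} [Semiring A] [Semiring B] (f : A →+* B) (n : ℕ) :
    (geomSumX A n).map f = geomSumX B n := by
  simp [geomSumX, Polynomial.map_sum]

lemma aeval_geomSumX {A B : Type*} [CommSemiring A] [Semiring B] [Algebra A B] (b : B) (n : ℕ) :
    Polynomial.aeval b (geomSumX A n) = ∑ i ∈ Finset.range n, b ^ i := by
  simp [geomSumX]

lemma monic_geomSumX (A : Type*) [Semiring A] {n : ℕ} (hn : n ≠ 0) : (geomSumX A n).Monic :=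
  Polynomial.monic_geom_sum_X hn

lemma geomSumX_mul_X_sub_C (A : Type*) [Ring A] (n : ℕ) :
    geomSumX A n * (Polynomial.X - Polynomial.C 1) = Polynomial.X ^ n - Polynomial.C 1 := by
  simpa [geomSumX] using geom_sum_mul (Polynomial.X : Polynomial A) n

lemma natDegree_geomSumX (A : Type*) [Ring A] [Nontrivial A] (n : ℕ) :
    (geomSumX A n).natDegree = n - 1 := by
  rcases eq_or_ne n 0 with rfl | hn
  · simp [geomSumX]
  · have hdeg := congrArg Polynomial.natDegree (geomSumX_mul_X_sub_C A n)
    rw [(monic_geomSumX A hn).natDegree_mul (Polynomial.monic_X_sub_C 1),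
      Polynomial.natDegree_X_sub_C, Polynomial.natDegree_X_pow_sub_C] at hdeg
    omega

lemma pow_eq_one_of_aeval_geomSumX_eq_zero {A B : Type*} [CommSemiring A] [Ring B] [Algebra A B]
    {b : B} {n : ℕ} (h : Polynomial.aeval b (geomSumX A n) = 0) : b ^ n = 1 := by
  rw [← sub_eq_zero, ← geom_sum_mul, ← aeval_geomSumX (A := A), h, zero_mul]

lemma isCoprime_geomSumX_comp (K : Type*) [Field K] [CharZero K] {n : ℕ} (hn : ¬ 3 ∣ n) :
    IsCoprime (geomSumX K n) ((geomSumX K n).comp (-1 - Polynomial.X)) := by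
  have coprime_rat : IsCoprime (geomSumX ℚ n) ((geomSumX ℚ n).comp (-1 - Polynomial.X)) := by
    rw [Polynomial.isCoprime_iff_aeval_ne_zero_of_isAlgClosed ℚ ℂ]
    intro z
    by_contra! ⟨hz, hw⟩
    have hL : Polynomial.aeval z (-1 - Polynomial.X : Polynomial ℚ) = -1 - z := by simp
    rw [Polynomial.aeval_comp, hL] at hw
    exact hn (three_dvd_of_pow_eq_one (pow_eq_one_of_aeval_geomSumX_eq_zero hz)
      (pow_eq_one_of_aeval_geomSumX_eq_zero hw))
  simpa [Polynomial.map_comp, map_geomSumX] using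
    coprime_rat.map (Polynomial.mapRingHom (algebraMap ℚ K))

lemma exists_eq_C_mul_of_mul_add_mul_eq_zero {A : Type*} [CommRing A] [NoZeroDivisors A]
    {f g q r : Polynomial A} (hf : f ≠ 0) (hfg : IsCoprime f g) (h : q * g + r * f = 0)
    (hdeg : q.natDegree ≤ f.natDegree) :
    ∃ c, q = Polynomial.C c * f ∧ r = -Polynomial.C c * g := by
  obtain ⟨t, rfl⟩ : f ∣ q := hfg.dvd_of_dvd_mul_right ⟨-r, by linear_combination h⟩
  have ht : t.natDegree = 0 := by
    rcases eq_or_ne t 0 with rfl | ht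
    · exact Polynomial.natDegree_zero
    · rw [Polynomial.natDegree_mul hf ht] at hdeg
      omega
  obtain ⟨c, rfl⟩ : ∃ c, Polynomial.C c = t := Polynomial.natDegree_eq_zero.mp ht
  exact ⟨c, mul_comm _ _, mul_left_cancel₀ hf (by linear_combination h)⟩

lemma comp_neg_one_sub_X_involutive (A : Type*) [CommRing A] :
    Function.Involutive fun p : Polynomial A ↦ p.comp (-1 - Polynomial.X) := by
  intro p
  simp [Polynomial.comp_assoc]

/-- Substitution of `-1 - x` for `y`, that is, reduction modulo `1 + x + y`. -/
noncomputable def evalNegOneSub (A : Type*) [CommRing A] :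
    MvPolynomial (Fin 2) A →ₐ[A] Polynomial A :=
  aeval ![Polynomial.X, -1 - Polynomial.X]

section evalNegOneSub

variable {A : Type*} [CommRing A]

lemma evalNegOneSub_one_add_X_add_X : evalNegOneSub A (1 + X 0 + X 1) = 0 := by
  simp [evalNegOneSub]

lemma evalNegOneSub_aeval_X_zero (p : Polynomial A) :
    evalNegOneSub A (Polynomial.aeval (X 0) p) = p := by
  simp [evalNegOneSub, ← Polynomial.aeval_algHom_apply]

lemma evalNegOneSub_aeval_X_one (p : Polynomial A) :
    evalNegOneSub A (Polynomial.aeval (X 1) p) = p.comp (-1 - Polynomial.X) := by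
  simp [evalNegOneSub, ← Polynomial.aeval_algHom_apply, Polynomial.comp_eq_aeval]

end evalNegOneSub

lemma map_aeval_X {σ A B : Type*} [CommSemiring A] [CommSemiring B] (f : A →+* B) (i : σ)
    (p : Polynomial A) :
    map f (Polynomial.aeval (X i : MvPolynomial σ A) p) = Polynomial.aeval (X i) (p.map f) := by
  rw [Polynomial.map_aeval_eq_aeval_map (φ := f) (by ext; simp), map_X]

lemma one_add_X_add_X_ne_zero (A : Type*) [CommSemiring A] [Nontrivial A] :
    (1 + X 0 + X 1 : MvPolynomial (Fin 2) A) ≠ 0 := by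
  intro h
  simpa using congrArg constantCoeff h

theorem usamo2021_p3_poly_general {K : Type*} [Field K] [CharZero K] {n : ℕ}
    {P : MvPolynomial (Fin 2) K} {Q R : Polynomial K} (hQ : Q.natDegree < n) (hP : P ≠ 0)
    (hid : P * (1 + X 0 + X 1) =
        Polynomial.aeval (X 0 : MvPolynomial (Fin 2) K) Q * (∑ j ∈ Finset.range n, X 1 ^ j) +
        Polynomial.aeval (X 1 : MvPolynomial (Fin 2) K) R * (∑ i ∈ Finset.range n, X 0 ^ i)) :
    3 ∣ n := by
  by_contra h3
  simp only [← aeval_geomSumX (A := K)] at hid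
  have hmod : Q * (geomSumX K n).comp (-1 - Polynomial.X) +
      R.comp (-1 - Polynomial.X) * geomSumX K n = 0 := by
    simpa only [map_mul, map_add (evalNegOneSub K) (_ * _), evalNegOneSub_one_add_X_add_X,
      evalNegOneSub_aeval_X_zero, evalNegOneSub_aeval_X_one, mul_zero]
      using (congrArg (evalNegOneSub K) hid).symm
  obtain ⟨c, rfl, hRc⟩ := exists_eq_C_mul_of_mul_add_mul_eq_zero
    (monic_geomSumX K (by omega)).ne_zero (isCoprime_geomSumX_comp K h3) hmod
    (by rw [natDegree_geomSumX]; omega)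
  obtain rfl : R = -Polynomial.C c * geomSumX K n :=
    (comp_neg_one_sub_X_involutive K).injective (by simpa using hRc)
  have hP0 : P * (1 + X 0 + X 1) = 0 := by
    rw [hid]
    simp only [map_mul, map_neg, Polynomial.aeval_C]
    ring
  exact hP ((mul_eq_zero.mp hP0).resolve_right (one_add_X_add_X_ne_zero K))

/-- If `P(x,y)`, `Q(x)`, `R(y)` are polynomials with nonnegative integer coefficients, `P ≠ 0`,
`P` has degree at most `n-2` in each variable, `Q` and `R` have degree at most `n-1`, and
`P(x,y)·(1+x+y) = Q(x)·(1+y+⋯+y^(n-1)) + R(y)·(1+x+⋯+x^(n-1))`, then `3 ∣ n`. -/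
theorem usamo2021_p3_poly (n : ℕ) (hn : 2 ≤ n)
    (P : MvPolynomial (Fin 2) ℕ) (Q R : Polynomial ℕ)
    (hPx : P.degreeOf 0 ≤ n - 2) (hPy : P.degreeOf 1 ≤ n - 2)
    (hQ : Q.natDegree ≤ n - 1) (hR : R.natDegree ≤ n - 1)
    (hP : P ≠ 0)
    (hid : P * (1 + X 0 + X 1) =
        Polynomial.aeval (X 0 : MvPolynomial (Fin 2) ℕ) Q * (∑ j ∈ Finset.range n, X 1 ^ j) +
        Polynomial.aeval (X 1 : MvPolynomial (Fin 2) ℕ) R * (∑ i ∈ Finset.range n, X 0 ^ i)) :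
    3 ∣ n := by
  let φ := Nat.castRingHom ℚ
  refine usamo2021_p3_poly_general (P := map φ P) (Q := Q.map φ) (R := R.map φ)
    (Polynomial.natDegree_map_le.trans_lt (by omega))
    ((map_ne_zero_iff _ (map_injective φ Nat.cast_injective)).mpr hP) ?_
  simpa [map_aeval_X] using congrArg (map φ) hid
end

section
/- Let S be a finite nonempty set of positive integers with the gcd-property. Then |S| is a power of 2, i.e., |S| = 2^k for some nonnegative integer k. -/
/-!
If `s ∈ S`, then `t ↦ gcd s t` is a bijection from `S` onto the divisors of `s`, so every element
of `S` has exactly `|S|` divisors. It suffices to show that `s` is squarefree. For a prime `p ∣ s`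
of multiplicity `e`, the bijection matches the `t ∈ S` prime to `p` with the divisors of `s` prime
to `p`, whence `|S| = (e + 1) * |{t ∈ S | ¬ p ∣ t}|`, so `e` depends only on `S` and `p`.
If `2 ≤ e`, the `t ∈ S` with `gcd s t = p` is divisible by `p` with multiplicity `1 ≠ e`, a
contradiction.
-/

theorem filter_not_dvd_divisors {p : ℕ} (hp : p.Prime) (n : ℕ) :
    {d ∈ n.divisors | ¬ p ∣ d} = (ordCompl[p] n).divisors := by
  obtain rfl | hn := eq_or_ne n 0
  · simp
  ext d
  simp only [Finset.mem_filter, Nat.mem_divisors]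
  constructor
  · rintro ⟨⟨hdn, -⟩, hpd⟩
    exact ⟨Nat.dvd_ordCompl_of_dvd_not_dvd hdn hpd, (Nat.ordCompl_pos p hn).ne'⟩
  · rintro ⟨hd, -⟩
    exact ⟨⟨hd.trans (Nat.ordCompl_dvd n p), hn⟩,
      fun hpd ↦ Nat.not_dvd_ordCompl hp hn (hpd.trans hd)⟩

theorem card_divisors_eq_factorization_add_one_mul {p : ℕ} (hp : p.Prime) (n : ℕ) :
    n.divisors.card = (n.factorization p + 1) * {d ∈ n.divisors | ¬ p ∣ d}.card := by
  obtain rfl | hn := eq_or_ne n 0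
  · simp
  have hcop : (ordProj[p] n).Coprime (ordCompl[p] n) :=
    (Nat.coprime_ordCompl hp hn).pow_left _
  calc n.divisors.card = (ordProj[p] n * ordCompl[p] n).divisors.card := by
        rw [Nat.ordProj_mul_ordCompl_eq_self]
    _ = (ordProj[p] n).divisors.card * (ordCompl[p] n).divisors.card := hcop.card_divisors_mul
    _ = (n.factorization p + 1) * {d ∈ n.divisors | ¬ p ∣ d}.card := by
        rw [filter_not_dvd_divisors hp, Nat.divisors_prime_pow hp, Finset.card_map,
          Finset.card_range]

theorem card_divisors_of_squarefree {n : ℕ} (hn : Squarefree n) :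
    n.divisors.card = 2 ^ n.primeFactors.card := by
  rw [Nat.card_divisors hn.ne_zero]
  refine Finset.prod_eq_pow_card fun p hp ↦ ?_
  rw [Nat.factorization_eq_one_of_squarefree hn (Nat.prime_of_mem_primeFactors hp)
    (Nat.dvd_of_mem_primeFactors hp)]

/-- The gcd-property of a set `S` of natural numbers: every positive divisor of every `s ∈ S` is
`gcd s t` for exactly one `t ∈ S`. It is stated for arbitrary sets, so neither finiteness
nor `0 ∉ S` is part of the notion. -/
def HasGCDProperty (S : Set ℕ) : Prop :=
  ∀ s ∈ S, ∀ d : ℕ, 0 < d → d ∣ s → ∃! t, t ∈ S ∧ Nat.gcd s t = d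

namespace HasGCDProperty

variable {S : Set ℕ} {s t m p : ℕ}

theorem zero_notMem (h : HasGCDProperty S) : 0 ∉ S := by
  intro h0
  have mem_of_pos : ∀ d, 0 < d → d ∈ S := fun d hd ↦ by
    obtain ⟨t, ⟨ht, hgcd⟩, -⟩ := h 0 h0 d hd (dvd_zero d)
    rwa [← hgcd, Nat.gcd_zero_left]
  have h13 : 1 = 3 := (h 2 (mem_of_pos 2 two_pos) 1 one_pos (one_dvd 2)).unique
    ⟨mem_of_pos 1 one_pos, by norm_num⟩ ⟨mem_of_pos 3 three_pos, by norm_num⟩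
  lia

theorem ne_zero (h : HasGCDProperty S) (hs : s ∈ S) : s ≠ 0 :=
  ne_of_mem_of_not_mem hs h.zero_notMem

theorem bijOn_gcd (h : HasGCDProperty S) (hs : s ∈ S) : Set.BijOn s.gcd S s.divisors := by
  have hs0 := h.ne_zero hs
  refine ⟨fun t _ ↦ ?_, fun t ht u hu htu ↦ ?_, fun d hd ↦ ?_⟩
  · exact Nat.mem_divisors.2 ⟨Nat.gcd_dvd_left s t, hs0⟩
  · exact (h s hs (s.gcd t) (Nat.gcd_pos_of_pos_left t hs0.pos) (Nat.gcd_dvd_left s t)).unique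
      ⟨ht, rfl⟩ ⟨hu, htu.symm⟩
  · exact (h s hs d (Nat.pos_of_mem_divisors hd) (Nat.dvd_of_mem_divisors hd)).exists

theorem finite (h : HasGCDProperty S) : S.Finite := by
  obtain rfl | ⟨s, hs⟩ := S.eq_empty_or_nonempty
  · exact Set.finite_empty
  · exact (h.bijOn_gcd hs).finite_iff_finite.2 s.divisors.finite_toSet

theorem ncard_eq_card_divisors (h : HasGCDProperty S) (hs : s ∈ S) :
    S.ncard = s.divisors.card := by
  rw [(h.bijOn_gcd hs).ncard_eq, Set.ncard_coe_finset]

theorem ncard_not_dvd_eq_card_divisors_not_dvd (h : HasGCDProperty S) (hs : s ∈ S) (hms : m ∣ s) :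
    {t ∈ S | ¬ m ∣ t}.ncard = {d ∈ s.divisors | ¬ m ∣ d}.card := by
  have hsep : {t ∈ S | ¬ m ∣ t} = S ∩ s.gcd ⁻¹' ({d ∈ s.divisors | ¬ m ∣ d} : Finset ℕ) := by
    ext t
    simp [Nat.dvd_gcd_iff, Nat.gcd_dvd_left, hms, h.ne_zero hs]
  have hbij := (h.bijOn_gcd hs).subset_right
    (Finset.coe_subset.2 (Finset.filter_subset (¬ m ∣ ·) s.divisors))
  rw [hsep, hbij.ncard_eq, Set.ncard_coe_finset]

theorem ncard_eq_factorization_add_one_mul (h : HasGCDProperty S) (hs : s ∈ S) (hp : p.Prime)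
    (hps : p ∣ s) : S.ncard = (s.factorization p + 1) * {t ∈ S | ¬ p ∣ t}.ncard := by
  rw [h.ncard_eq_card_divisors hs, h.ncard_not_dvd_eq_card_divisors_not_dvd hs hps,
    card_divisors_eq_factorization_add_one_mul hp]

theorem factorization_eq_of_dvd (h : HasGCDProperty S) (hs : s ∈ S) (ht : t ∈ S)
    (hp : p.Prime) (hps : p ∣ s) (hpt : p ∣ t) : s.factorization p = t.factorization p := by
  have hst := (h.ncard_eq_factorization_add_one_mul hs hp hps).symm.trans
    (h.ncard_eq_factorization_add_one_mul ht hp hpt)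
  have hS : S.ncard ≠ 0 := (Set.ncard_pos h.finite).2 ⟨s, hs⟩ |>.ne'
  rw [h.ncard_eq_factorization_add_one_mul hs hp hps] at hS
  exact Nat.succ_injective (Nat.eq_of_mul_eq_mul_right (right_ne_zero_of_mul hS).pos hst)

theorem factorization_le_one (h : HasGCDProperty S) (hs : s ∈ S) (p : ℕ) :
    s.factorization p ≤ 1 := by
  by_contra! he
  have hp : p.Prime := by
    by_contra hp
    rw [Nat.factorization_eq_zero_of_not_prime s hp] at he
    lia
  have hps : p ∣ s := Nat.dvd_of_factorization_pos (by lia)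
  obtain ⟨t, ⟨ht, hgcd⟩, -⟩ := h s hs p hp.pos hps
  have hpt : p ∣ t := hgcd ▸ Nat.gcd_dvd_right s t
  have hmin : min (s.factorization p) (t.factorization p) = 1 := by
    rw [← hp.factorization_self, ← hgcd, Nat.factorization_gcd (h.ne_zero hs) (h.ne_zero ht),
      Finsupp.inf_apply]
  have heq := h.factorization_eq_of_dvd hs ht hp hps hpt
  lia

theorem squarefree (h : HasGCDProperty S) (hs : s ∈ S) : Squarefree s :=
  Nat.squarefree_of_factorization_le_one (h.ne_zero hs) (h.factorization_le_one hs)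

end HasGCDProperty

theorem usamo2021_p4_general {S : Set ℕ} (hne : S.Nonempty) (h : HasGCDProperty S) :
    S.Finite ∧ ∃ k : ℕ, S.ncard = 2 ^ k := by
  obtain ⟨s, hs⟩ := hne
  refine ⟨h.finite, s.primeFactors.card, ?_⟩
  rw [h.ncard_eq_card_divisors hs, card_divisors_of_squarefree (h.squarefree hs)]

/-- If a finite nonempty set `S` of positive integers has the gcd-property (for each `s ∈ S` and
each positive divisor `d` of `s` there is a unique `t ∈ S` with `gcd s t = d`), then `|S|` is a
power of `2`. -/
theorem usamo2021_p4 (S : Finset ℕ) (hpos : ∀ s ∈ S, 0 < s) (hne : S.Nonempty)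
    (hgcd : ∀ s ∈ S, ∀ d : ℕ, 0 < d → d ∣ s → ∃! t, t ∈ S ∧ Nat.gcd s t = d) :
    ∃ k : ℕ, S.card = 2 ^ k := by
  rw [← Set.ncard_coe_finset]
  exact (usamo2021_p4_general (S := S) hne hgcd).2
end

section
/- Let k be a positive integer and let p₁, q₁, p₂, q₂, …, p_k, q_k be 2k pairwise distinct positive primes. For a subset I ⊆ {1,…,k}, let s(I) = ∏_{i ∈ I} p_i · ∏_{j ∉ I} q_j. Then the set S = { s(I) : I ⊆ {1,…,k} } has exactly 2^k elements and has the gcd-property. -/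
/-!
The subset `I` is encoded by the set `I.disjSum Iᶜ` of the indices of the primes dividing `s(I)`.
For pairwise non-associated primes, products over sets of indices turn inclusion into divisibility
and intersection into gcd, so the gcd-property becomes a statement about finite sets: for every
`D ⊆ I.disjSum Iᶜ` there is a unique `J` with `I.disjSum Iᶜ ∩ J.disjSum Jᶜ = D`. That intersection
records exactly the places where `I` and `J` agree, and prescribing those determines `J`.
-/

open Finset Function

/-- The gcd-property of a set `S`: each divisor of each `s ∈ S` is the gcd of `s` and a unique
`t ∈ S`. As gcds in a `GCDMonoid` are defined up to units only, equality with the divisor is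
replaced by association. -/
def HasGcdProperty {M : Type*} [CommMonoidWithZero M] [GCDMonoid M] (S : Set M) : Prop :=
  ∀ s ∈ S, ∀ d, d ∣ s → ∃! t, t ∈ S ∧ Associated (gcd s t) d

/-- The analogue of the gcd-property for a family of finite sets, with subsets in place of divisors
and intersections in place of gcds. -/
def HasInterProperty {α : Type*} [DecidableEq α] (𝒜 : Set (Finset α)) : Prop :=
  ∀ A ∈ 𝒜, ∀ D ⊆ A, ∃! B, B ∈ 𝒜 ∧ A ∩ B = D

theorem hasInterProperty_range_disjSum_compl (ι : Type*) [Fintype ι] [DecidableEq ι] :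
    HasInterProperty (Set.range fun I : Finset ι => I.disjSum Iᶜ) := by
  rintro _ ⟨I, rfl⟩ D hD
  have hinl (i : ι) (hi : .inl i ∈ D) : i ∈ I := by simpa using hD hi
  have hinr (i : ι) (hi : .inr i ∈ D) : i ∉ I := by simpa using hD hi
  have inter_eq_iff (J : Finset ι) : I.disjSum Iᶜ ∩ J.disjSum Jᶜ = D ↔
      ∀ i, i ∈ J ↔ (i ∈ I ↔ .inl i ∈ D ∨ .inr i ∈ D) := by
    simp only [Finset.ext_iff, Sum.forall, mem_inter, inl_mem_disjSum, inr_mem_disjSum,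
      mem_compl, ← forall_and]
    refine forall_congr' fun i => ?_
    have := hinl i
    have := hinr i
    tauto
  let K : Finset ι := {i | i ∈ I ↔ .inl i ∈ D ∨ .inr i ∈ D}
  have mem_K (i : ι) : i ∈ K ↔ (i ∈ I ↔ .inl i ∈ D ∨ .inr i ∈ D) := mem_filter_univ i
  refine ⟨_, ⟨⟨K, rfl⟩, (inter_eq_iff K).2 mem_K⟩, ?_⟩
  rintro _ ⟨⟨J, rfl⟩, hJ⟩
  have hJK : J = K := by
    ext i
    rw [(inter_eq_iff J).1 hJ i, mem_K]
  rw [hJK]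

section IsRelPrime

variable {α M : Type*} {r : α → M}

theorem dvd_prod_iff_mem_of_pairwise_isRelPrime [CommMonoid M] [DecompositionMonoid M]
    (hr : ∀ a, ¬ IsUnit (r a)) (hrel : Pairwise (IsRelPrime on r)) {a : α} {A : Finset α} :
    r a ∣ ∏ b ∈ A, r b ↔ a ∈ A := by
  refine ⟨fun hdvd => ?_, dvd_prod_of_mem r⟩
  by_contra ha
  have hcop : IsRelPrime (r a) (∏ b ∈ A, r b) :=
    IsRelPrime.prod_right fun b hb => hrel (ne_of_mem_of_not_mem hb ha).symm
  exact hr a (hcop dvd_rfl hdvd)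

theorem associated_prod_iff_eq_of_pairwise_isRelPrime [CommMonoid M] [DecompositionMonoid M]
    (hr : ∀ a, ¬ IsUnit (r a)) (hrel : Pairwise (IsRelPrime on r)) {A B : Finset α} :
    Associated (∏ a ∈ A, r a) (∏ a ∈ B, r a) ↔ A = B := by
  refine ⟨fun h => ?_, fun h => h ▸ .rfl⟩
  ext a
  rw [← dvd_prod_iff_mem_of_pairwise_isRelPrime hr hrel, h.dvd_iff_dvd_right,
    dvd_prod_iff_mem_of_pairwise_isRelPrime hr hrel]

theorem gcd_prod_prod_associated_prod_inter [CommMonoidWithZero M] [GCDMonoid M] [DecidableEq α]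
    (hrel : Pairwise (IsRelPrime on r)) (A B : Finset α) :
    Associated (gcd (∏ a ∈ A, r a) (∏ a ∈ B, r a)) (∏ a ∈ A ∩ B, r a) := by
  have hcop : IsRelPrime (∏ a ∈ A \ B, r a) (∏ a ∈ B \ A, r a) :=
    IsRelPrime.prod_left fun a ha => IsRelPrime.prod_right fun b hb =>
      hrel (ne_of_mem_of_not_mem (mem_sdiff.1 ha).1 (mem_sdiff.1 hb).2)
  rw [← prod_inter_mul_prod_sdiff A B, ← prod_inter_mul_prod_sdiff B A, inter_comm B A]
  exact (_root_.gcd_mul_left' _ _ _).trans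
    (associated_mul_unit_left _ _ (gcd_isUnit_iff_isRelPrime.2 hcop))

end IsRelPrime

section Prime

variable {α M : Type*} [CommMonoidWithZero M] {r : α → M}

theorem exists_subset_associated_prod_of_dvd_prod [IsCancelMulZero M] (hr : ∀ a, Prime (r a))
    {A : Finset α} {d : M} (hd : d ∣ ∏ a ∈ A, r a) :
    ∃ D ⊆ A, Associated d (∏ a ∈ D, r a) := by
  classical
  obtain ⟨e, he⟩ := hd
  obtain ⟨D, E, u, v, hDE, -, huv, rfl, -⟩ :=
    mul_eq_mul_prime_prod (fun a _ => hr a) (he.symm.trans (one_mul _).symm)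
  exact ⟨D, hDE ▸ subset_union_left, associated_unit_mul_left _ _ (.of_mul_eq_one v huv.symm)⟩

theorem pairwise_isRelPrime_of_prime [IsCancelMulZero M] (hr : ∀ a, Prime (r a))
    (hassoc : Pairwise fun a b => ¬ Associated (r a) (r b)) : Pairwise (IsRelPrime on r) :=
  fun a b hab => (hr a).irreducible.isRelPrime_iff_not_dvd.2 fun hdvd =>
    hassoc hab ((hr a).associated_of_dvd (hr b) hdvd)

theorem HasInterProperty.hasGcdProperty_image_prod [GCDMonoid M] [DecidableEq α]
    {𝒜 : Set (Finset α)} (h𝒜 : HasInterProperty 𝒜) (hr : ∀ a, Prime (r a))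
    (hassoc : Pairwise fun a b => ¬ Associated (r a) (r b)) :
    HasGcdProperty ((fun A => ∏ a ∈ A, r a) '' 𝒜) := by
  have hrel := pairwise_isRelPrime_of_prime hr hassoc
  rintro _ ⟨A, hA, rfl⟩ d hd
  obtain ⟨D, hDA, hdD⟩ := exists_subset_associated_prod_of_dvd_prod hr hd
  have gcd_associated_iff (B : Finset α) :
      Associated (gcd (∏ a ∈ A, r a) (∏ a ∈ B, r a)) d ↔ A ∩ B = D := by
    rw [← associated_prod_iff_eq_of_pairwise_isRelPrime (fun a => (hr a).not_isUnit) hrel]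
    have hgcd := gcd_prod_prod_associated_prod_inter hrel A B
    exact ⟨fun h => hgcd.symm.trans (h.trans hdD), fun h => hgcd.trans (h.trans hdD.symm)⟩
  obtain ⟨B, ⟨hB, hAB⟩, hunique⟩ := h𝒜 A hA D hDA
  refine ⟨_, ⟨⟨B, hB, rfl⟩, (gcd_associated_iff B).2 hAB⟩, ?_⟩
  rintro _ ⟨⟨C, hC, rfl⟩, hAC⟩
  exact congrArg (fun A => ∏ a ∈ A, r a) (hunique C ⟨hC, (gcd_associated_iff C).1 hAC⟩)

end Prime

theorem hasGcdProperty_nat_iff {S : Set ℕ} :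
    HasGcdProperty S ↔ ∀ s ∈ S, ∀ d, d ∣ s → ∃! t, t ∈ S ∧ Nat.gcd s t = d := by
  simp only [HasGcdProperty, associated_iff_eq, gcd_eq_nat_gcd]

theorem usamo2021_p4_construction_general {ι M : Type*} [Fintype ι] [DecidableEq ι]
    [CommMonoidWithZero M] [GCDMonoid M] [DecidableEq M] (p q : ι → M)
    (hp : ∀ i, Prime (p i)) (hq : ∀ i, Prime (q i))
    (hpinj : ∀ i j, Associated (p i) (p j) → i = j)
    (hqinj : ∀ i j, Associated (q i) (q j) → i = j)
    (hpq : ∀ i j, ¬ Associated (p i) (q j))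
    (S : Finset M)
    (hS : S = (univ : Finset (Finset ι)).image fun I => (∏ i ∈ I, p i) * ∏ j ∈ Iᶜ, q j) :
    #S = 2 ^ Fintype.card ι ∧ HasGcdProperty (S : Set M) := by
  let r : ι ⊕ ι → M := Sum.elim p q
  have hr : ∀ a, Prime (r a) := Sum.forall.2 ⟨hp, hq⟩
  have hassoc : Pairwise fun a b => ¬ Associated (r a) (r b) := by
    rintro (i | i) (j | j) hij h
    · exact hij (congrArg _ (hpinj i j h))
    · exact hpq i j h
    · exact hpq j i h.symm
    · exact hij (congrArg _ (hqinj i j h))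
  have hS_r : S = univ.image fun I : Finset ι => ∏ a ∈ I.disjSum Iᶜ, r a := by
    simp only [hS, prod_disjSum, r, Sum.elim_inl, Sum.elim_inr]
  have hinj : Injective fun I : Finset ι => ∏ a ∈ I.disjSum Iᶜ, r a := fun I J hIJ =>
    (disjSum_inj.1 ((associated_prod_iff_eq_of_pairwise_isRelPrime (fun a => (hr a).not_isUnit)
      (pairwise_isRelPrime_of_prime hr hassoc)).1 (.of_eq hIJ))).1
  constructor
  · rw [hS_r, card_image_of_injective _ hinj, card_univ, Fintype.card_finset]
  · rw [hS_r, coe_image, coe_univ, Set.image_univ, Set.range_comp' (fun A => ∏ a ∈ A, r a)]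
    exact (hasInterProperty_range_disjSum_compl ι).hasGcdProperty_image_prod hr hassoc

/-- Given `2k` pairwise distinct primes `p₁, q₁, …, p_k, q_k`, the set of products
`s(I) = ∏_{i ∈ I} p_i · ∏_{j ∉ I} q_j` over subsets `I ⊆ {1, …, k}` has exactly `2^k` elements
and has the gcd-property. -/
theorem usamo2021_p4_construction (k : ℕ) (hk : 0 < k) (p q : Fin k → ℕ)
    (hp : ∀ i, (p i).Prime) (hq : ∀ i, (q i).Prime)
    (hpinj : Function.Injective p) (hqinj : Function.Injective q)
    (hpq : ∀ i j, p i ≠ q j)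
    (S : Finset ℕ)
    (hS : S = (Finset.univ : Finset (Finset (Fin k))).image
        fun I => (∏ i ∈ I, p i) * ∏ j ∈ Iᶜ, q j) :
    S.card = 2 ^ k ∧
      ∀ s ∈ S, ∀ d : ℕ, 0 < d → d ∣ s → ∃! t, t ∈ S ∧ Nat.gcd s t = d := by
  obtain ⟨hcard, hgcd⟩ := usamo2021_p4_construction_general p q (fun i => (hp i).prime)
    (fun i => (hq i).prime) (fun _ _ h => hpinj (associated_iff_eq.1 h))
    (fun _ _ h => hqinj (associated_iff_eq.1 h)) (fun i j h => hpq i j (associated_iff_eq.1 h)) S hS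
  exact ⟨by simpa using hcard, fun s hs d _ => hasGcdProperty_nat_iff.1 hgcd s hs d⟩
end

section
/- Let n ≥ 4 be an integer and let a₁, a₂, …, a_{2n} be positive real numbers (indices taken modulo 2n) satisfying, for every i = 1, 2, …, n, the equations a_{2i−1} = 1/a_{2i−2} + 1/a_{2i} and a_{2i} = a_{2i−1} + a_{2i+1} (where a₀ means a_{2n} and a_{2n+1} means a₁). Then a_{2i−1} = 1 and a_{2i} = 2 for all i = 1, 2, …, n. -/
/-!
Eliminating the odd-indexed terms leaves `e i = 2 / e i + 1 / e (i - 1) + 1 / e (i + 1)` for the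
even-indexed terms `e`. Since `e i > 2 / e i`, every `e i` exceeds `1`, hence is at most `4`; so `e`
has a positive infimum `m` and a finite supremum `M`. Bounding the neighbours by `m` and `M` gives
`M ≤ 2 / M + 2 / m` and `2 / m + 2 / M ≤ m`, so `M ≤ m` and `e` is constant; the constant is the
positive root of `c = 4 / c`.
-/

/-- A positive solution of the system satisfied by the even-indexed terms once the odd-indexed ones
are eliminated. The maps `l` and `r` send an index to its two neighbours; they are arbitrary, so
that no order or cyclic structure on the index type is involved. -/
structure IsReciprocalSolution {ι : Type*} (e : ι → ℝ) (l r : ι → ι) : Prop where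
  pos : ∀ i, 0 < e i
  eq_add : ∀ i, e i = 2 / e i + 1 / e (l i) + 1 / e (r i)

namespace IsReciprocalSolution

variable {ι : Type*} {e : ι → ℝ} {l r : ι → ι} {m M : ℝ}

theorem one_lt (h : IsReciprocalSolution e l r) (i : ι) : 1 < e i := by
  have hi := h.pos i
  have two_div_lt : 2 / e i < e i := by
    linarith [h.eq_add i, one_div_pos.2 (h.pos (l i)), one_div_pos.2 (h.pos (r i))]
  rw [div_lt_iff₀ hi] at two_div_lt
  nlinarith

theorem le_four (h : IsReciprocalSolution e l r) (i : ι) : e i ≤ 4 := by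
  have one_div_le_one (j : ι) : 1 / e j ≤ 1 := (div_le_one (h.pos j)).2 (h.one_lt j).le
  have two_div_le : 2 / e i ≤ 2 := div_le_self zero_le_two (h.one_lt i).le
  linarith [h.eq_add i, one_div_le_one (l i), one_div_le_one (r i)]

theorem mul_sq_le (h : IsReciprocalSolution e l r) (hm : 0 < m) (hle : ∀ j, m ≤ e j) (i : ι) :
    m * e i ^ 2 ≤ 2 * (m + e i) := by
  have hi := h.pos i
  calc m * e i ^ 2 = m * e i * (2 / e i + 1 / e (l i) + 1 / e (r i)) := by
        rw [← h.eq_add]; ring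
    _ ≤ m * e i * (2 / e i + 1 / m + 1 / m) := by gcongr <;> exact hle _
    _ = 2 * (m + e i) := by field_simp; ring

theorem le_mul_sq (h : IsReciprocalSolution e l r) (hM : 0 < M) (hle : ∀ j, e j ≤ M) (i : ι) :
    2 * (M + e i) ≤ M * e i ^ 2 := by
  have hi := h.pos i
  calc 2 * (M + e i) = M * e i * (2 / e i + 1 / M + 1 / M) := by field_simp; ring
    _ ≤ M * e i * (2 / e i + 1 / e (l i) + 1 / e (r i)) := by
        gcongr <;> first | exact h.pos _ | exact hle _
    _ = M * e i ^ 2 := by rw [← h.eq_add]; ring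

theorem bddBelow_range (h : IsReciprocalSolution e l r) : BddBelow (Set.range e) :=
  ⟨1, Set.forall_mem_range.2 fun i => (h.one_lt i).le⟩

theorem bddAbove_range (h : IsReciprocalSolution e l r) : BddAbove (Set.range e) :=
  ⟨4, Set.forall_mem_range.2 h.le_four⟩

theorem iSup_le_iInf [Nonempty ι] (h : IsReciprocalSolution e l r) : ⨆ i, e i ≤ ⨅ i, e i := by
  set m := ⨅ i, e i
  set M := ⨆ i, e i
  have m_le (i : ι) : m ≤ e i := ciInf_le h.bddBelow_range i
  have le_M (i : ι) : e i ≤ M := le_ciSup h.bddAbove_range i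
  have m_pos : 0 < m := one_pos.trans_le (le_ciInf fun i => (h.one_lt i).le)
  have M_pos : 0 < M := (h.pos (Classical.arbitrary ι)).trans_le (le_M _)
  -- The bounds on `e i` are closed conditions, so they pass to the limits `M` and `m`.
  have upper : m * M ^ 2 ≤ 2 * (m + M) := by
    have closed : IsClosed {x : ℝ | m * x ^ 2 ≤ 2 * (m + x)} :=
      isClosed_le (by fun_prop) (by fun_prop)
    exact closure_minimal (Set.range_subset_iff.2 (h.mul_sq_le m_pos m_le)) closed
      (csSup_mem_closure (Set.range_nonempty e) h.bddAbove_range)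
  have lower : 2 * (M + m) ≤ M * m ^ 2 := by
    have closed : IsClosed {x : ℝ | 2 * (M + x) ≤ M * x ^ 2} :=
      isClosed_le (by fun_prop) (by fun_prop)
    exact closure_minimal (Set.range_subset_iff.2 (h.le_mul_sq M_pos le_M)) closed
      (csInf_mem_closure (Set.range_nonempty e) h.bddBelow_range)
  refine le_of_mul_le_mul_left ?_ (mul_pos m_pos M_pos)
  calc m * M * M = m * M ^ 2 := by ring
    _ ≤ 2 * (m + M) := upper
    _ = 2 * (M + m) := by ring
    _ ≤ M * m ^ 2 := lower
    _ = m * M * m := by ring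

theorem apply_eq_apply (h : IsReciprocalSolution e l r) (i j : ι) : e i = e j := by
  have : Nonempty ι := ⟨i⟩
  have apply_le (i j : ι) : e i ≤ e j :=
    calc e i ≤ ⨆ k, e k := le_ciSup h.bddAbove_range i
      _ ≤ ⨅ k, e k := h.iSup_le_iInf
      _ ≤ e j := ciInf_le h.bddBelow_range j
  exact (apply_le i j).antisymm (apply_le j i)

theorem eq_two (h : IsReciprocalSolution e l r) (i : ι) : e i = 2 := by
  have hi := h.pos i
  have sq_eq : e i ^ 2 = 2 ^ 2 := by
    have h_const := h.eq_add i
    rw [h.apply_eq_apply (l i) i, h.apply_eq_apply (r i) i] at h_const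
    field_simp at h_const
    linarith
  exact (pow_left_inj₀ hi.le zero_le_two two_ne_zero).1 sq_eq

end IsReciprocalSolution

theorem isReciprocalSolution_even {a : ℤ → ℝ} (hpos : ∀ i, 0 < a (2 * i))
    (hodd : ∀ i, a (2 * i - 1) = 1 / a (2 * i - 2) + 1 / a (2 * i))
    (heven : ∀ i, a (2 * i) = a (2 * i - 1) + a (2 * i + 1)) :
    IsReciprocalSolution (fun i => a (2 * i)) (· - 1) (· + 1) where
  pos := hpos
  eq_add i := by
    have h_next : a (2 * i + 1) = 1 / a (2 * i) + 1 / a (2 * (i + 1)) := by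
      convert hodd (i + 1) using 3 <;> ring_nf
    calc a (2 * i) = a (2 * i - 1) + a (2 * i + 1) := heven i
      _ = 1 / a (2 * i - 2) + 1 / a (2 * i) + (1 / a (2 * i) + 1 / a (2 * (i + 1))) := by
          rw [hodd, h_next]
      _ = 2 / a (2 * i) + 1 / a (2 * (i - 1)) + 1 / a (2 * (i + 1)) := by
          rw [mul_sub_one]; ring

theorem usamo2021_p5_general (a : ℤ → ℝ) (hpos : ∀ i, 0 < a (2 * i))
    (hodd : ∀ i, a (2 * i - 1) = 1 / a (2 * i - 2) + 1 / a (2 * i))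
    (heven : ∀ i, a (2 * i) = a (2 * i - 1) + a (2 * i + 1)) :
    (∀ i, a (2 * i - 1) = 1) ∧ (∀ i, a (2 * i) = 2) := by
  have even_eq_two (i : ℤ) : a (2 * i) = 2 :=
    (isReciprocalSolution_even hpos hodd heven).eq_two i
  refine ⟨fun i => ?_, even_eq_two⟩
  calc a (2 * i - 1) = 1 / a (2 * (i - 1)) + 1 / a (2 * i) := by rw [hodd, mul_sub_one]
    _ = 1 / 2 + 1 / 2 := by rw [even_eq_two, even_eq_two]
    _ = 1 := add_halves 1

/-- USAMO 2021 Problem 5: if positive reals `a₁, …, a_{2n}` (indexed cyclically modulo `2n`,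
with `n ≥ 4`) satisfy `a_{2i-1} = 1/a_{2i-2} + 1/a_{2i}` and `a_{2i} = a_{2i-1} + a_{2i+1}` for
all `i`, then all odd-indexed terms equal `1` and all even-indexed terms equal `2`. -/
theorem usamo2021_p5 (n : ℕ) (hn : 4 ≤ n) (a : ZMod (2 * n) → ℝ)
    (hpos : ∀ i, 0 < a i)
    (hodd : ∀ i : ℤ, a ((2 * i - 1 : ℤ) : ZMod (2 * n)) =
      1 / a ((2 * i - 2 : ℤ) : ZMod (2 * n)) + 1 / a ((2 * i : ℤ) : ZMod (2 * n)))
    (heven : ∀ i : ℤ, a ((2 * i : ℤ) : ZMod (2 * n)) =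
      a ((2 * i - 1 : ℤ) : ZMod (2 * n)) + a ((2 * i + 1 : ℤ) : ZMod (2 * n))) :
    (∀ i : ℤ, a ((2 * i - 1 : ℤ) : ZMod (2 * n)) = 1) ∧
      (∀ i : ℤ, a ((2 * i : ℤ) : ZMod (2 * n)) = 2) :=
  usamo2021_p5_general (fun i => a i) (fun _ => hpos _) hodd heven
end

section
/- Let n ≥ 2 be an integer and let b₁, b₂, …, b_n be positive real numbers (indices taken modulo n) satisfying b_i = 1/b_{i−1} + 2/b_i + 1/b_{i+1} for every i. Then b_i = 2 for all i. -/
/-!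
Let `m` and `M` be the infimum and the supremum of the family, `a` the weight of a term on itself
and `r` the total weight of its neighbours. The equation at terms approaching `M` and at terms
approaching `m` gives `M ≤ a / M + r / m` and `a / m + r / M ≤ m`, hence
`a * M / m ≤ m * M - r ≤ a * m / M` and so `M ≤ m`: the family is constant. Here `m` is positive and
`M` is finite because each term `x` satisfies `a / x ≤ x`, that is, `√a ≤ x`.
-/

open Set

theorem sqrt_le_of_div_le_self {a x : ℝ} (hx : 0 < x) (h : a / x ≤ x) : √a ≤ x :=
  Real.sqrt_le_iff.mpr ⟨hx.le, by rwa [sq, ← div_le_iff₀ hx]⟩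

theorem le_div_add_of_mem_closure {S : Set ℝ} {a c x : ℝ} (hx : x ∈ closure S) (hx₀ : x ≠ 0)
    (h : ∀ y ∈ S, y ≤ a / y + c) : x ≤ a / x + c :=
  ContinuousWithinAt.closure_le hx continuousWithinAt_id
    ((continuousWithinAt_const.div continuousWithinAt_id hx₀).add continuousWithinAt_const) h

theorem div_add_le_of_mem_closure {S : Set ℝ} {a c x : ℝ} (hx : x ∈ closure S) (hx₀ : x ≠ 0)
    (h : ∀ y ∈ S, a / y + c ≤ y) : a / x + c ≤ x :=
  ContinuousWithinAt.closure_le hx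
    ((continuousWithinAt_const.div continuousWithinAt_id hx₀).add continuousWithinAt_const)
    continuousWithinAt_id h

theorem le_of_le_div_add_div_of_div_add_div_le {K : Type*} [Field K] [LinearOrder K]
    [IsStrictOrderedRing K] {a r m M : K} (ha : 0 < a) (hm : 0 < m) (hM : 0 < M)
    (hupper : M ≤ a / M + r / m) (hlower : a / m + r / M ≤ m) : M ≤ m := by
  have hratio : a * M / m ≤ a * m / M :=
    calc a * M / m = (a / m + r / M) * M - r := by field_simp; ring
      _ ≤ m * M - r := by gcongr
      _ = M * m - r := by rw [mul_comm]
      _ ≤ (a / M + r / m) * m - r := by gcongr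
      _ = a * m / M := by field_simp; ring
  rw [div_le_div_iff₀ hm hM, mul_assoc, mul_assoc, mul_le_mul_iff_right₀ ha] at hratio
  exact (mul_self_le_mul_self_iff hM.le hm.le).mpr hratio

section ReciprocalEquation

variable {ι : Type*} {prev next : ι → ι} {b : ι → ℝ} {a p q : ℝ}

theorem le_div_add_div_of_forall_le (hp : 0 ≤ p) (hq : 0 ≤ q)
    (heq : ∀ i, b i = p / b (prev i) + a / b i + q / b (next i))
    {m : ℝ} (hm : 0 < m) (hle : ∀ i, m ≤ b i) (i : ι) : b i ≤ a / b i + (p + q) / m :=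
  calc b i = p / b (prev i) + a / b i + q / b (next i) := heq i
    _ ≤ p / m + a / b i + q / m := by gcongr <;> exact hle _
    _ = a / b i + (p + q) / m := by ring

theorem div_add_div_le_of_forall_le (hp : 0 ≤ p) (hq : 0 ≤ q) (hpos : ∀ i, 0 < b i)
    (heq : ∀ i, b i = p / b (prev i) + a / b i + q / b (next i))
    {M : ℝ} (hle : ∀ i, b i ≤ M) (i : ι) : a / b i + (p + q) / M ≤ b i :=
  calc a / b i + (p + q) / M = p / M + a / b i + q / M := by ring
    _ ≤ p / b (prev i) + a / b i + q / b (next i) := by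
      gcongr <;> first | exact hpos _ | exact hle _
    _ = b i := (heq i).symm

theorem sqrt_le_of_reciprocal_equation (hp : 0 ≤ p) (hq : 0 ≤ q) (hpos : ∀ i, 0 < b i)
    (heq : ∀ i, b i = p / b (prev i) + a / b i + q / b (next i)) (i : ι) : √a ≤ b i := by
  have hprev : 0 ≤ p / b (prev i) := div_nonneg hp (hpos _).le
  have hnext : 0 ≤ q / b (next i) := div_nonneg hq (hpos _).le
  exact sqrt_le_of_div_le_self (hpos i) (by linarith [heq i])

theorem bddAbove_range_of_reciprocal_equation (ha : 0 < a) (hp : 0 ≤ p) (hq : 0 ≤ q)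
    (hpos : ∀ i, 0 < b i) (heq : ∀ i, b i = p / b (prev i) + a / b i + q / b (next i)) :
    BddAbove (range b) := by
  have hsqrt := sqrt_le_of_reciprocal_equation hp hq hpos heq
  have hsqrt_pos : 0 < √a := Real.sqrt_pos.mpr ha
  refine ⟨a / √a + (p + q) / √a, forall_mem_range.mpr fun i ↦ ?_⟩
  calc b i ≤ a / b i + (p + q) / √a := le_div_add_div_of_forall_le hp hq heq hsqrt_pos hsqrt i
    _ ≤ a / √a + (p + q) / √a := by gcongr; exact hsqrt i

theorem apply_le_apply_of_reciprocal_equation (ha : 0 < a) (hp : 0 ≤ p) (hq : 0 ≤ q)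
    (hpos : ∀ i, 0 < b i) (heq : ∀ i, b i = p / b (prev i) + a / b i + q / b (next i))
    (i j : ι) : b i ≤ b j := by
  have : Nonempty ι := ⟨i⟩
  have hsqrt := sqrt_le_of_reciprocal_equation hp hq hpos heq
  have habove := bddAbove_range_of_reciprocal_equation ha hp hq hpos heq
  have hbelow : BddBelow (range b) := ⟨√a, forall_mem_range.mpr hsqrt⟩
  have hinf_pos : 0 < ⨅ k, b k := (Real.sqrt_pos.mpr ha).trans_le (le_ciInf hsqrt)
  have hsup_pos : 0 < ⨆ k, b k := (hpos i).trans_le (le_ciSup habove i)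
  have hupper : ⨆ k, b k ≤ a / (⨆ k, b k) + (p + q) / ⨅ k, b k :=
    le_div_add_of_mem_closure (csSup_mem_closure (range_nonempty b) habove) hsup_pos.ne'
      (forall_mem_range.mpr (le_div_add_div_of_forall_le hp hq heq hinf_pos (ciInf_le hbelow)))
  have hlower : a / (⨅ k, b k) + (p + q) / (⨆ k, b k) ≤ ⨅ k, b k :=
    div_add_le_of_mem_closure (csInf_mem_closure (range_nonempty b) hbelow) hinf_pos.ne'
      (forall_mem_range.mpr (div_add_div_le_of_forall_le hp hq hpos heq (le_ciSup habove)))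
  calc b i ≤ ⨆ k, b k := le_ciSup habove i
    _ ≤ ⨅ k, b k := le_of_le_div_add_div_of_div_add_div_le ha hinf_pos hsup_pos hupper hlower
    _ ≤ b j := ciInf_le hbelow j

theorem usamo2021_p5_even_terms_general (ha : 0 < a) (hp : 0 ≤ p) (hq : 0 ≤ q)
    (hpos : ∀ i, 0 < b i) (heq : ∀ i, b i = p / b (prev i) + a / b i + q / b (next i)) (i : ι) :
    b i = √(p + a + q) := by
  have hconst (j : ι) : b j = b i :=
    (apply_le_apply_of_reciprocal_equation ha hp hq hpos heq j i).antisymm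
      (apply_le_apply_of_reciprocal_equation ha hp hq hpos heq i j)
  have hself : b i = (p + a + q) / b i := by
    simpa only [hconst, ← add_div] using heq i
  rw [eq_div_iff (hpos i).ne'] at hself
  rw [← hself, Real.sqrt_mul_self (hpos i).le]

end ReciprocalEquation

/-- If positive reals `b₁, …, b_n` (indexed cyclically modulo `n`, with `n ≥ 2`) satisfy
`b_i = 1/b_{i-1} + 2/b_i + 1/b_{i+1}` for every `i`, then `b_i = 2` for all `i`. -/
theorem usamo2021_p5_even_terms (n : ℕ) (hn : 2 ≤ n) (b : ZMod n → ℝ)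
    (hpos : ∀ i, 0 < b i)
    (heq : ∀ i : ZMod n, b i = 1 / b (i - 1) + 2 / b i + 1 / b (i + 1)) :
    ∀ i : ZMod n, b i = 2 := fun i ↦
  (usamo2021_p5_even_terms_general two_pos zero_le_one zero_le_one hpos heq i).trans (by norm_num)
end

section
/- Let n ≥ 2 be an integer and let a₁, a₂, …, a_{2n} be positive real numbers (indices taken modulo 2n) satisfying, for every i = 1, 2, …, n, the equations a_{2i−1} = 1/a_{2i−2} + 1/a_{2i} and a_{2i} = a_{2i−1} + a_{2i+1}. Then Σ_{i=1}^{n} a_{2i} = Σ_{i=1}^{n} 4/a_{2i}. -/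
/-!
Summing the even-indexed equations over a full cycle counts every odd-indexed term twice, and
summing the odd-indexed equations counts every reciprocal `1/a_{2i}` twice. So each reciprocal
contributes four times to the sum of the even-indexed terms.
-/

theorem sum_Icc_comp_add_one_of_periodic {R M : Type*} [AddMonoidWithOne R] [AddCommMonoid M]
    {f : R → M} {n : ℕ} (hf : Function.Periodic f n) :
    ∑ i ∈ Finset.Icc 1 n, f (i + 1) = ∑ i ∈ Finset.Icc 1 n, f i := by
  cases n with
  | zero => simp
  | succ m =>
    have wrap : f ((m + 1 : ℕ) + 1) = f 1 := by
      simpa only [← Nat.cast_one (R := R), ← Nat.cast_add, add_comm] using hf 1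
    have reindex (g : ℕ → M) :
        ∑ i ∈ Finset.Icc 1 (m + 1), g i = ∑ i ∈ Finset.range (m + 1), g (i + 1) := by
      rw [← Finset.Ico_add_one_right_eq_Icc, Finset.range_eq_Ico, Finset.sum_Ico_add', zero_add]
    rw [reindex (f <| · + 1), reindex (f ·), Finset.sum_range_succ, Finset.sum_range_succ', wrap]
    simp only [Nat.cast_add_one, Nat.cast_zero, zero_add]

theorem sum_eq_four_nsmul_sum_of_periodic {M : Type*} [AddCommMonoid M] {b x c : ℤ → M} {n : ℕ}
    (hc : Function.Periodic c n) (hx : ∀ i, x i = c (i - 1) + c i)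
    (hb : ∀ i, b i = x i + x (i + 1)) :
    ∑ i ∈ Finset.Icc 1 n, b i = 4 • ∑ i ∈ Finset.Icc 1 n, c i := by
  have hx_periodic : Function.Periodic x n := fun i ↦ by
    rw [hx, hx, add_sub_right_comm, hc, hc]
  have sum_x : ∑ i ∈ Finset.Icc 1 n, x i = 2 • ∑ i ∈ Finset.Icc 1 n, c i := by
    have shift := sum_Icc_comp_add_one_of_periodic (hc.sub_const 1)
    simp only [add_sub_cancel_right] at shift
    simp only [hx, Finset.sum_add_distrib, ← shift, two_nsmul]
  calc ∑ i ∈ Finset.Icc 1 n, b i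
      = ∑ i ∈ Finset.Icc 1 n, x i + ∑ i ∈ Finset.Icc 1 n, x (i + 1) := by
        simp only [hb, Finset.sum_add_distrib]
    _ = 2 • ∑ i ∈ Finset.Icc 1 n, x i := by
        rw [sum_Icc_comp_add_one_of_periodic hx_periodic, two_nsmul]
    _ = 4 • ∑ i ∈ Finset.Icc 1 n, c i := by rw [sum_x, ← mul_nsmul]

theorem usamo2021_p5_sum_general {K : Type*} [DivisionRing K] (n : ℕ) (a : ZMod (2 * n) → K)
    (_hne : ∀ i : ℤ, a ((2 * i : ℤ) : ZMod (2 * n)) ≠ 0)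
    (hodd : ∀ i : ℤ, a ((2 * i - 1 : ℤ) : ZMod (2 * n)) =
      1 / a ((2 * i - 2 : ℤ) : ZMod (2 * n)) + 1 / a ((2 * i : ℤ) : ZMod (2 * n)))
    (heven : ∀ i : ℤ, a ((2 * i : ℤ) : ZMod (2 * n)) =
      a ((2 * i - 1 : ℤ) : ZMod (2 * n)) + a ((2 * i + 1 : ℤ) : ZMod (2 * n))) :
    ∑ i ∈ Finset.Icc 1 n, a ((2 * i : ℕ) : ZMod (2 * n)) =
      ∑ i ∈ Finset.Icc 1 n, 4 / a ((2 * i : ℕ) : ZMod (2 * n)) := by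
  let b : ℤ → K := fun i ↦ a ((2 * i : ℤ) : ZMod (2 * n))
  let x : ℤ → K := fun i ↦ a ((2 * i - 1 : ℤ) : ZMod (2 * n))
  have hb_periodic : Function.Periodic b n := fun i ↦ by
    have two_mul_n : (2 * n : ZMod (2 * n)) = 0 := mod_cast ZMod.natCast_self (2 * n)
    simp [b, mul_add, two_mul_n]
  have hx (i : ℤ) : x i = 1 / b (i - 1) + 1 / b i := by
    simpa only [b, x, mul_sub, mul_one] using hodd i
  have hb (i : ℤ) : b i = x i + x (i + 1) := by
    have next_odd : 2 * (i + 1) - 1 = 2 * i + 1 := by ring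
    simpa only [b, x, next_odd] using heven i
  have sum_b := sum_eq_four_nsmul_sum_of_periodic (hb_periodic.comp (1 / ·)) hx hb
  simpa [b, Finset.mul_sum, div_eq_mul_inv] using sum_b

/-- For positive reals `a₁, …, a_{2n}` (indexed cyclically modulo `2n`, `n ≥ 2`) satisfying
`a_{2i-1} = 1/a_{2i-2} + 1/a_{2i}` and `a_{2i} = a_{2i-1} + a_{2i+1}` for all `i`, the sum of
the even-indexed terms equals the sum of `4/a_{2i}`. -/
theorem usamo2021_p5_sum (n : ℕ) (hn : 2 ≤ n) (a : ZMod (2 * n) → ℝ)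
    (hpos : ∀ i, 0 < a i)
    (hodd : ∀ i : ℤ, a ((2 * i - 1 : ℤ) : ZMod (2 * n)) =
      1 / a ((2 * i - 2 : ℤ) : ZMod (2 * n)) + 1 / a ((2 * i : ℤ) : ZMod (2 * n)))
    (heven : ∀ i : ℤ, a ((2 * i : ℤ) : ZMod (2 * n)) =
      a ((2 * i - 1 : ℤ) : ZMod (2 * n)) + a ((2 * i + 1 : ℤ) : ZMod (2 * n))) :
    ∑ i ∈ Finset.Icc 1 n, a ((2 * i : ℕ) : ZMod (2 * n)) =
      ∑ i ∈ Finset.Icc 1 n, 4 / a ((2 * i : ℕ) : ZMod (2 * n)) :=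
  usamo2021_p5_sum_general n a (fun _ ↦ (hpos _).ne') hodd heven
end

section
/- Let ABCDEF be a convex hexagon in the Euclidean plane satisfying AB ∥ DE, BC ∥ EF, CD ∥ FA, and AB·DE = BC·EF = CD·FA. Let X, Y, Z be the midpoints of segments AD, BE, CF respectively, and assume X, Y, Z are not collinear; assume also that A, C, E are not collinear and B, D, F are not collinear. Then the orthocenter of triangle XYZ is the midpoint of the segment joining the circumcenter of triangle ACE and the circumcenter of triangle BDF. In particular, the circumcenter of triangle ACE, the circumcenter of triangle BDF, and the orthocenter of triangle XYZ are collinear. -/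
open EuclideanGeometry Affine

local notation "Pt" => EuclideanSpace ℝ (Fin 2)

/-- The four points `X`, `Y`, `Z`, `W` lie strictly on the same side of the line `PQ`. -/
def SameSideOfLine (P Q X Y Z W : EuclideanSpace ℝ (Fin 2)) : Prop :=
  (affineSpan ℝ {P, Q}).SSameSide X Y ∧ (affineSpan ℝ {P, Q}).SSameSide X Z ∧
    (affineSpan ℝ {P, Q}).SSameSide X W

/-- `ABCDEF` is a convex hexagon (vertices in this cyclic order): for each side, the four
remaining vertices lie strictly on the same side of the line containing that side. -/
def ConvexHexagon (A B C D E F : EuclideanSpace ℝ (Fin 2)) : Prop :=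
  SameSideOfLine A B C D E F ∧ SameSideOfLine B C D E F A ∧ SameSideOfLine C D E F A B ∧
    SameSideOfLine D E F A B C ∧ SameSideOfLine E F A B C D ∧ SameSideOfLine F A B C D E

/-!
In the trapezoid `BCEF`, the line `YZ` through the midpoints of the diagonals `BE`, `CF` also
contains the midpoints of the legs `CE` and `BF`, and the power of either of these with respect to
the circle `XYZ` is `-⟪C - B, F - E⟫ / 4`. Convexity makes opposite sides point in opposite
directions, so this power is `BC·EF / 4`, the same for all three trapezoids. The midpoints of the
sides of `ACE` and of `BDF` are therefore equidistant from the circumcenter `N` of `XYZ`, which is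
thus the nine-point center of both triangles. Taking `N` as origin, the circumcenter of a triangle
with nine-point center `N` is the sum of its vertices, and so is the orthocenter of a triangle with
circumcenter `N`. As `X + Y + Z` is half the sum of the six vertices of the hexagon, the orthocenter
of `XYZ` is the midpoint of the two circumcenters.
-/

section Midpoint

variable {k V P : Type*} [Field k] [Invertible (2 : k)] [AddCommGroup V] [Module k V]
  [AddTorsor V P]

lemma midpoint_mem_line_midpoint_midpoint_of_parallel {b c e f : P}
    (hpar : ∃ r : k, f -ᵥ e = r • (c -ᵥ b)) (hne : midpoint k b e ≠ midpoint k c f) :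
    midpoint k c e ∈ line[k, midpoint k b e, midpoint k c f] := by
  obtain ⟨r, hr⟩ := hpar
  have hdiag : midpoint k c f -ᵥ midpoint k b e = (⅟2 * (1 + r)) • (c -ᵥ b) := by
    rw [midpoint_vsub_midpoint, midpoint_eq_smul_add, hr]
    module
  have hr_ne : 1 + r ≠ 0 := by
    intro h
    rw [h, mul_zero, zero_smul, vsub_eq_zero_iff_eq] at hdiag
    exact hne hdiag.symm
  have hmem : midpoint k c e = AffineMap.lineMap (midpoint k b e) (midpoint k c f) (1 + r)⁻¹ := by
    rw [← vsub_left_cancel_iff (p := midpoint k b e), AffineMap.lineMap_vsub_left, hdiag,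
      midpoint_vsub_midpoint_same_right, smul_smul, mul_left_comm, inv_mul_cancel₀ hr_ne, mul_one]
  exact hmem ▸ AffineMap.lineMap_mem_affineSpan_pair _ _ _

end Midpoint

section Euclidean

variable {V P : Type*} [NormedAddCommGroup V] [InnerProductSpace ℝ V] [MetricSpace P]
  [NormedAddTorsor V P]

lemma power_eq_inner_of_mem_line {s : Sphere P} {a b p : P} (ha : a ∈ s) (hb : b ∈ s)
    (hp : p ∈ line[ℝ, a, b]) : s.power p = inner ℝ (a -ᵥ p) (b -ᵥ p) := by
  obtain ⟨t, rfl⟩ := mem_affineSpan_pair_iff_exists_lineMap_eq.1 hp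
  set u := a -ᵥ s.center with hu
  set v := b -ᵥ s.center with hv
  have hba : b -ᵥ a = v - u := (vsub_sub_vsub_cancel_right b a s.center).symm
  have hab : a -ᵥ b = u - v := (vsub_sub_vsub_cancel_right a b s.center).symm
  have hp_center : AffineMap.lineMap a b t -ᵥ s.center = t • (v - u) + u := by
    rw [AffineMap.lineMap_apply, vadd_vsub_assoc, hba]
  have hu_sq : inner ℝ u u = s.radius ^ 2 := by
    rw [real_inner_self_eq_norm_sq, hu, ← dist_eq_norm_vsub, mem_sphere.1 ha]
  have hv_sq : inner ℝ v v = s.radius ^ 2 := by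
    rw [real_inner_self_eq_norm_sq, hv, ← dist_eq_norm_vsub, mem_sphere.1 hb]
  rw [Sphere.power, dist_eq_norm_vsub V, hp_center, ← real_inner_self_eq_norm_sq,
    AffineMap.left_vsub_lineMap, AffineMap.right_vsub_lineMap, hab, hba]
  simp only [inner_add_left, inner_add_right, inner_sub_left, inner_sub_right,
    real_inner_smul_left, real_inner_smul_right, real_inner_comm u v, hu_sq, hv_sq]
  ring

lemma power_midpoint_of_parallel {s : Sphere P} {b c e f : P}
    (hpar : ∃ r : ℝ, f -ᵥ e = r • (c -ᵥ b)) (hne : midpoint ℝ b e ≠ midpoint ℝ c f)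
    (hbe : midpoint ℝ b e ∈ s) (hcf : midpoint ℝ c f ∈ s) :
    s.power (midpoint ℝ c e) = -inner ℝ (c -ᵥ b) (f -ᵥ e) / 4 := by
  rw [power_eq_inner_of_mem_line hbe hcf
      (midpoint_mem_line_midpoint_midpoint_of_parallel hpar hne),
    midpoint_vsub_midpoint_same_right, midpoint_vsub_midpoint_same_left,
    ← neg_vsub_eq_vsub_rev c b, real_inner_smul_left, real_inner_smul_right, inner_neg_left,
    invOf_eq_inv]
  ring

lemma sum_vsub_ninePointCircle_center {n : ℕ} [NeZero n] (s : Simplex ℝ P n) :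
    ∑ i, (s.points i -ᵥ s.ninePointCircle.center) =
      s.circumcenter -ᵥ s.ninePointCircle.center := by
  have hn : (n : ℝ) ≠ 0 := NeZero.ne _
  have hsum : ∑ i, (s.points i -ᵥ s.ninePointCircle.center) =
      (n + 1 : ℝ) • (s.centroid -ᵥ s.ninePointCircle.center) := by
    rw [s.centroid_vsub_eq, smul_smul, mul_inv_cancel₀ (Nat.cast_add_one_ne_zero n), one_smul]
  rw [hsum, s.ninePointCircle_center, vsub_vadd_eq_vsub_sub, vsub_vadd_eq_vsub_sub, vsub_self]
  match_scalars
  field_simp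
  ring

/-- The points of the affine span of a simplex with a given power with respect to its
circumsphere; all of them are equidistant from the circumcenter. -/
def HasCircumspherePower {n : ℕ} (t : Simplex ℝ P n) (κ : ℝ) (p : P) : Prop :=
  p ∈ affineSpan ℝ (Set.range t.points) ∧ t.circumsphere.power p = κ

lemma hasCircumspherePower_midpoint_of_parallel {n : ℕ} {t : Simplex ℝ P n} {i j : Fin (n + 1)}
    (hij : i ≠ j) {b c e f : P} (hpar : ∃ r : ℝ, f -ᵥ e = r • (c -ᵥ b))
    (hi : t.points i = midpoint ℝ b e) (hj : t.points j = midpoint ℝ c f) :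
    HasCircumspherePower t (-inner ℝ (c -ᵥ b) (f -ᵥ e) / 4) (midpoint ℝ c e) := by
  have hne : midpoint ℝ b e ≠ midpoint ℝ c f := hi ▸ hj ▸ t.independent.injective.ne hij
  have hline : line[ℝ, midpoint ℝ b e, midpoint ℝ c f] ≤ affineSpan ℝ (Set.range t.points) := by
    rw [← hi, ← hj]
    exact affineSpan_mono ℝ (Set.pair_subset (Set.mem_range_self i) (Set.mem_range_self j))
  exact ⟨hline (midpoint_mem_line_midpoint_midpoint_of_parallel hpar hne),
    power_midpoint_of_parallel hpar hne (hi ▸ t.mem_circumsphere i) (hj ▸ t.mem_circumsphere j)⟩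

lemma hasCircumspherePower_midpoint_legs_of_parallel {n : ℕ} {t : Simplex ℝ P n}
    {i j : Fin (n + 1)} (hij : i ≠ j) {b c e f : P} (hpar : ∃ r : ℝ, f -ᵥ e = r • (c -ᵥ b))
    (hi : t.points i = midpoint ℝ b e) (hj : t.points j = midpoint ℝ c f) :
    HasCircumspherePower t (-inner ℝ (c -ᵥ b) (f -ᵥ e) / 4) (midpoint ℝ c e) ∧
      HasCircumspherePower t (-inner ℝ (c -ᵥ b) (f -ᵥ e) / 4) (midpoint ℝ b f) := by
  have hpar_rev : ∃ r : ℝ, e -ᵥ f = r • (b -ᵥ c) := by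
    obtain ⟨r, hr⟩ := hpar
    exact ⟨r, by rw [← neg_vsub_eq_vsub_rev f e, ← neg_vsub_eq_vsub_rev c b, hr, smul_neg]⟩
  have hinner : inner ℝ (c -ᵥ b) (f -ᵥ e) = inner ℝ (b -ᵥ c) (e -ᵥ f) := by
    rw [← neg_vsub_eq_vsub_rev b c, ← neg_vsub_eq_vsub_rev e f, inner_neg_neg]
  exact ⟨hasCircumspherePower_midpoint_of_parallel hij hpar hi hj,
    hinner ▸ hasCircumspherePower_midpoint_of_parallel hij.symm hpar_rev hj hi⟩

lemma ninePointCircle_center_eq_circumcenter {n : ℕ} [NeZero n] {s t : Simplex ℝ P n} {κ : ℝ}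
    (h : ∀ i, HasCircumspherePower t κ (s.faceOppositeCentroid i)) :
    s.ninePointCircle.center = t.circumcenter := by
  have hspan : affineSpan ℝ (Set.range s.medial.points) = affineSpan ℝ (Set.range t.points) := by
    apply s.medial.independent.affineSpan_eq_of_le_of_card_eq_finrank_add_one
    · exact affineSpan_le.2 (Set.range_subset_iff.2 fun i ↦ (h i).1)
    · rw [direction_affineSpan, t.independent.finrank_vectorSpan (Fintype.card_fin _),
        Fintype.card_fin]
  have hdist (i) : dist (s.medial.points i) t.circumcenter = √(κ + t.circumradius ^ 2) := by
    rw [← (h i).2, Sphere.power, t.circumsphere_center, t.circumsphere_radius, sub_add_cancel,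
      Real.sqrt_sq dist_nonneg, s.medial_points]
  rw [s.ninePointCircle_eq_circumsphere_medial]
  exact (s.medial.eq_circumcenter_of_dist_eq (hspan ▸ t.circumcenter_mem_affineSpan) hdist).symm

lemma faceOppositeCentroid_eq_midpoint (t : Triangle ℝ P) {i j l : Fin 3}
    (hij : i ≠ j) (hil : i ≠ l) (hjl : j ≠ l) :
    t.faceOppositeCentroid i = midpoint ℝ (t.points j) (t.points l) := by
  have huniv : (Finset.univ : Finset (Fin 3)) = {i, j, l} := by
    decide +revert
  rw [t.faceOppositeCentroid_eq_sum_vsub_vadd, huniv, Finset.sum_insert (by simp [hij, hil]),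
    Finset.sum_pair hjl, vsub_self, zero_add, Nat.cast_ofNat, ← invOf_eq_inv, smul_add,
    ← midpoint_vsub, vsub_vadd]

lemma ninePointCircle_center_eq_circumcenter_of_midpoints {s t : Triangle ℝ P} {κ : ℝ}
    (h₀ : HasCircumspherePower t κ (midpoint ℝ (s.points 1) (s.points 2)))
    (h₁ : HasCircumspherePower t κ (midpoint ℝ (s.points 2) (s.points 0)))
    (h₂ : HasCircumspherePower t κ (midpoint ℝ (s.points 0) (s.points 1))) :
    s.ninePointCircle.center = t.circumcenter := by
  refine ninePointCircle_center_eq_circumcenter (κ := κ) fun i ↦ ?_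
  fin_cases i
  · exact faceOppositeCentroid_eq_midpoint s (i := 0) (j := 1) (l := 2) (by decide) (by decide)
      (by decide) ▸ h₀
  · exact faceOppositeCentroid_eq_midpoint s (i := 1) (j := 2) (l := 0) (by decide) (by decide)
      (by decide) ▸ h₁
  · exact faceOppositeCentroid_eq_midpoint s (i := 2) (j := 0) (l := 1) (by decide) (by decide)
      (by decide) ▸ h₂

lemma orthocenter_eq_midpoint_of_ninePointCircle_center_eq {s₁ s₂ t : Triangle ℝ P}
    (σ τ : Equiv.Perm (Fin 3))
    (ht : ∀ i, t.points i = midpoint ℝ (s₁.points (σ i)) (s₂.points (τ i)))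
    (h₁ : s₁.ninePointCircle.center = t.circumcenter)
    (h₂ : s₂.ninePointCircle.center = t.circumcenter) :
    t.orthocenter = midpoint ℝ s₁.circumcenter s₂.circumcenter := by
  rw [← vsub_left_cancel_iff (p := t.circumcenter)]
  calc t.orthocenter -ᵥ t.circumcenter = ∑ i, (t.points i -ᵥ t.circumcenter) :=
        t.orthocenter_vsub_circumcenter_eq_sum_vsub
    _ = (⅟2 : ℝ) • ∑ i, (s₁.points i -ᵥ t.circumcenter) +
          (⅟2 : ℝ) • ∑ i, (s₂.points i -ᵥ t.circumcenter) := by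
        simp_rw [ht, midpoint_vsub, Finset.sum_add_distrib, ← Finset.smul_sum]
        rw [Equiv.sum_comp σ fun i ↦ s₁.points i -ᵥ t.circumcenter,
          Equiv.sum_comp τ fun i ↦ s₂.points i -ᵥ t.circumcenter]
    _ = (⅟2 : ℝ) • (s₁.circumcenter -ᵥ t.circumcenter) +
          (⅟2 : ℝ) • (s₂.circumcenter -ᵥ t.circumcenter) := by
        rw [← h₁, sum_vsub_ninePointCircle_center, h₁, ← h₂, sum_vsub_ninePointCircle_center]
    _ = midpoint ℝ s₁.circumcenter s₂.circumcenter -ᵥ t.circumcenter := (midpoint_vsub _ _ _).symm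

end Euclidean

section Orientation

variable {V P : Type*} [NormedAddCommGroup V] [InnerProductSpace ℝ V] [MetricSpace P]
  [NormedAddTorsor V P] [Fact (Module.finrank ℝ V = 2)] [Module.Oriented ℝ V (Fin 2)]

lemma oangle_sign_eq_of_sSameSide {a b x y : P} (h : line[ℝ, a, b].SSameSide x y) :
    (∡ a b x).sign = (∡ a b y).sign := by
  rw [← oangle_swap₂₃_sign a x b, ← oangle_swap₂₃_sign a y b,
    h.oangle_sign_eq (left_mem_affineSpan_pair ℝ a b) (right_mem_affineSpan_pair ℝ a b)]

lemma oangle_sign_ne_zero_of_notMem_line {a b x : P} (hab : a ≠ b) (hx : x ∉ line[ℝ, a, b]) :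
    (∡ a b x).sign ≠ 0 := fun h ↦
  hx <| (oangle_sign_eq_zero_iff_collinear.1 h).mem_affineSpan_of_mem_of_ne
    (by simp) (by simp) (by simp) hab

lemma neg_of_vsub_eq_smul_vsub_of_oangle_sign_eq {a b d e : P} {r : ℝ}
    (hr : e -ᵥ d = r • (b -ᵥ a)) (hsign : (∡ a b d).sign = (∡ d e a).sign)
    (hne : (∡ a b d).sign ≠ 0) : r < 0 := by
  have hade : (∡ a d e).sign = SignType.sign r * -(∡ a b d).sign := by
    rw [oangle_rotate_sign d a b, oangle, oangle, hr, Orientation.oangle_sign_smul_right,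
      ← neg_vsub_eq_vsub_rev d a, Orientation.oangle_sign_neg_left]
  rw [← oangle_rotate_sign a d e, ← hsign] at hade
  refine sign_eq_neg_one_iff.1 (mul_right_cancel₀ hne ?_)
  rw [neg_one_mul, ← neg_eq_iff_eq_neg, ← mul_neg, ← hade]

end Orientation

namespace ConvexHexagon

variable {A B C D E F : Pt}

lemma rotate (h : ConvexHexagon A B C D E F) : ConvexHexagon B C D E F A :=
  ⟨h.2.1, h.2.2.1, h.2.2.2.1, h.2.2.2.2.1, h.2.2.2.2.2, h.1⟩

lemma left_ne (h : ConvexHexagon A B C D E F) : A ≠ B := by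
  rintro rfl
  exact h.2.1.2.2.right_notMem (left_mem_affineSpan_pair ℝ _ _)

section Oriented

variable [Fact (Module.finrank ℝ Pt = 2)] [Module.Oriented ℝ Pt (Fin 2)]

lemma oangle_sign_rotate (h : ConvexHexagon A B C D E F) :
    (∡ A B C).sign = (∡ B C D).sign := by
  rw [← oangle_rotate_sign, oangle_sign_eq_of_sSameSide h.2.1.2.2]

lemma oangle_sign_opposite (h : ConvexHexagon A B C D E F) :
    (∡ A B D).sign = (∡ D E A).sign :=
  calc (∡ A B D).sign = (∡ A B C).sign := (oangle_sign_eq_of_sSameSide h.1.1).symm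
    _ = (∡ B C D).sign := h.oangle_sign_rotate
    _ = (∡ C D E).sign := h.rotate.oangle_sign_rotate
    _ = (∡ D E F).sign := h.rotate.rotate.oangle_sign_rotate
    _ = (∡ D E A).sign := oangle_sign_eq_of_sSameSide h.rotate.rotate.rotate.1.1

end Oriented

lemma inner_eq_neg_dist_mul_dist (h : ConvexHexagon A B C D E F)
    (hpar : ∃ r : ℝ, E -ᵥ D = r • (B -ᵥ A)) :
    inner ℝ (B -ᵥ A) (E -ᵥ D) = -(dist A B * dist D E) := by
  obtain ⟨r, hr⟩ := hpar
  have hr_neg : r < 0 := by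
    have : Fact (Module.finrank ℝ Pt = 2) := ⟨finrank_euclideanSpace_fin⟩
    let : Module.Oriented ℝ Pt (Fin 2) :=
      ⟨(EuclideanSpace.basisFun (Fin 2) ℝ).toBasis.orientation⟩
    exact neg_of_vsub_eq_smul_vsub_of_oangle_sign_eq hr h.oangle_sign_opposite
      (oangle_sign_ne_zero_of_notMem_line h.left_ne h.1.1.right_notMem)
  rw [dist_comm A B, dist_comm D E, dist_eq_norm_vsub, dist_eq_norm_vsub, hr, norm_smul,
    Real.norm_of_nonpos hr_neg.le, real_inner_smul_right, real_inner_self_eq_norm_sq]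
  ring

end ConvexHexagon

theorem usamo2021_p6_general {V P : Type*} [NormedAddCommGroup V] [InnerProductSpace ℝ V]
    [MetricSpace P] [NormedAddTorsor V P] {A B C D E F : P}
    (hpar₁ : ∃ r : ℝ, E -ᵥ D = r • (B -ᵥ A))
    (hpar₂ : ∃ r : ℝ, F -ᵥ E = r • (C -ᵥ B))
    (hpar₃ : ∃ r : ℝ, A -ᵥ F = r • (D -ᵥ C))
    (hinner₁ : inner ℝ (B -ᵥ A) (E -ᵥ D) = inner ℝ (C -ᵥ B) (F -ᵥ E))
    (hinner₂ : inner ℝ (C -ᵥ B) (F -ᵥ E) = inner ℝ (D -ᵥ C) (A -ᵥ F))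
    (hACE : ¬Collinear ℝ ({A, C, E} : Set P))
    (hBDF : ¬Collinear ℝ ({B, D, F} : Set P))
    (hXYZ : ¬Collinear ℝ ({midpoint ℝ A D, midpoint ℝ B E, midpoint ℝ C F} : Set P)) :
    Triangle.orthocenter (⟨![midpoint ℝ A D, midpoint ℝ B E, midpoint ℝ C F],
        affineIndependent_iff_not_collinear_set.2 hXYZ⟩ : Triangle ℝ P) =
      midpoint ℝ
        ((⟨![A, C, E], affineIndependent_iff_not_collinear_set.2 hACE⟩ :
          Triangle ℝ P).circumcenter)
        ((⟨![B, D, F], affineIndependent_iff_not_collinear_set.2 hBDF⟩ :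
          Triangle ℝ P).circumcenter) ∧
    Collinear ℝ ({(⟨![A, C, E], affineIndependent_iff_not_collinear_set.2 hACE⟩ :
          Triangle ℝ P).circumcenter,
        (⟨![B, D, F], affineIndependent_iff_not_collinear_set.2 hBDF⟩ :
          Triangle ℝ P).circumcenter,
        Triangle.orthocenter (⟨![midpoint ℝ A D, midpoint ℝ B E, midpoint ℝ C F],
          affineIndependent_iff_not_collinear_set.2 hXYZ⟩ :
          Triangle ℝ P)} : Set P) := by
  set t : Triangle ℝ P := ⟨![midpoint ℝ A D, midpoint ℝ B E, midpoint ℝ C F], _⟩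
  obtain ⟨hBD, hAE⟩ := hasCircumspherePower_midpoint_legs_of_parallel
    (t := t) (i := 0) (j := 1) (by decide) hpar₁ rfl rfl
  obtain ⟨hCE, hBF⟩ := hasCircumspherePower_midpoint_legs_of_parallel
    (t := t) (i := 1) (j := 2) (by decide) hpar₂ rfl rfl
  obtain ⟨hDF, hCA⟩ := hasCircumspherePower_midpoint_legs_of_parallel
    (t := t) (i := 2) (j := 0) (by decide) hpar₃ rfl (midpoint_comm A D)
  rw [hinner₁, hinner₂] at hBD hAE
  rw [hinner₂] at hCE hBF
  have horth := orthocenter_eq_midpoint_of_ninePointCircle_center_eq (t := t)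
    (s₁ := ⟨![A, C, E], affineIndependent_iff_not_collinear_set.2 hACE⟩)
    (s₂ := ⟨![B, D, F], affineIndependent_iff_not_collinear_set.2 hBDF⟩)
    (Equiv.swap 1 2) (Equiv.swap 0 1) (fun | 0 => rfl | 1 => midpoint_comm B E | 2 => rfl)
    (ninePointCircle_center_eq_circumcenter_of_midpoints hCE (midpoint_comm (R := ℝ) A E ▸ hAE)
      (midpoint_comm (R := ℝ) C A ▸ hCA))
    (ninePointCircle_center_eq_circumcenter_of_midpoints hDF (midpoint_comm (R := ℝ) B F ▸ hBF)
      hBD)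
  refine ⟨horth, ?_⟩
  rw [horth]
  exact collinear_triple_of_mem_affineSpan_pair (left_mem_affineSpan_pair ℝ _ _)
    (right_mem_affineSpan_pair ℝ _ _) (AffineMap.lineMap_mem_affineSpan_pair _ _ _)

/-- USAMO 2021 Problem 6: for a convex hexagon `ABCDEF` with `AB ∥ DE`, `BC ∥ EF`, `CD ∥ FA`
and `AB·DE = BC·EF = CD·FA`, with `X`, `Y`, `Z` the midpoints of `AD`, `BE`, `CF`, the
orthocenter of `XYZ` is the midpoint of the circumcenters of `ACE` and `BDF`; in particular
these three points are collinear. -/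
theorem usamo2021_p6 (A B C D E F : Pt)
    (hconv : ConvexHexagon A B C D E F)
    (hpar₁ : ∃ r : ℝ, E - D = r • (B - A))
    (hpar₂ : ∃ r : ℝ, F - E = r • (C - B))
    (hpar₃ : ∃ r : ℝ, A - F = r • (D - C))
    (hlen₁ : dist A B * dist D E = dist B C * dist E F)
    (hlen₂ : dist B C * dist E F = dist C D * dist F A)
    (hACE : ¬Collinear ℝ ({A, C, E} : Set Pt))
    (hBDF : ¬Collinear ℝ ({B, D, F} : Set Pt))
    (hXYZ : ¬Collinear ℝ ({midpoint ℝ A D, midpoint ℝ B E, midpoint ℝ C F} : Set Pt)) :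
    Triangle.orthocenter (⟨![midpoint ℝ A D, midpoint ℝ B E, midpoint ℝ C F],
        affineIndependent_iff_not_collinear_set.2 hXYZ⟩ : Triangle ℝ Pt) =
      midpoint ℝ
        ((⟨![A, C, E], affineIndependent_iff_not_collinear_set.2 hACE⟩ :
          Triangle ℝ Pt).circumcenter)
        ((⟨![B, D, F], affineIndependent_iff_not_collinear_set.2 hBDF⟩ :
          Triangle ℝ Pt).circumcenter) ∧
    Collinear ℝ ({(⟨![A, C, E], affineIndependent_iff_not_collinear_set.2 hACE⟩ :
          Triangle ℝ Pt).circumcenter,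
        (⟨![B, D, F], affineIndependent_iff_not_collinear_set.2 hBDF⟩ :
          Triangle ℝ Pt).circumcenter,
        Triangle.orthocenter (⟨![midpoint ℝ A D, midpoint ℝ B E, midpoint ℝ C F],
          affineIndependent_iff_not_collinear_set.2 hXYZ⟩ :
          Triangle ℝ Pt)} : Set Pt) := by
  have hinner₁ := hconv.inner_eq_neg_dist_mul_dist hpar₁
  have hinner₂ := hconv.rotate.inner_eq_neg_dist_mul_dist hpar₂
  have hinner₃ := hconv.rotate.rotate.inner_eq_neg_dist_mul_dist hpar₃
  exact usamo2021_p6_general hpar₁ hpar₂ hpar₃ (by rw [hinner₁, hinner₂, hlen₁])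
    (by rw [hinner₂, hinner₃, hlen₂]) hACE hBDF hXYZ
end
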